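/- For all Schwartz functions f, ψ ∈ 𝓢(ℝ^d), the harmonic oscillator commutes with left Moyal multiplication according to H(f ⋆ ψ) − f ⋆ (Hψ) = −( Σ_{μ,ν} (G^{-1})_{μν} ∂_μ∂_ν f ) ⋆ ψ − 2 Σ_μ (∂_μ f) ⋆ (∇_μ ψ), where H ψ := −Δψ + Ω̃²‖x‖²ψ and (G^{-1})_{μν} = δ_{μν} − ¼Ω̃²(Θ²)_{μν}. -/

import Mathlib

/-!
Two product rules for `⋆` give the commutator. Evaluating the inner integral of the Moyal product
gives `(f ⋆ g)(x) = (2π)^{-d} ∫ f(x + ½Θk) e^{-i⟨k,x⟩} ĝ(k) dk` with `ĝ(k) = ∫ g(y) e^{i⟨k,y⟩} dy`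
(`moyal_eq`), an integral that converges absolutely because `ĝ` is Schwartz.

* Differentiating under the integral and using that `-i k_μ ĝ` is the transform of `∂_μ g` gives
  the Leibniz rule `∂_μ(f ⋆ g) = ∂_μ f ⋆ g + f ⋆ ∂_μ g` (`fderiv_moyal`).
* Integrating by parts in `k`, with `∂_μ ĝ` equal to `i` times the transform of `x_μ g`, gives
  `x_μ (f ⋆ g) = f ⋆ (x_μ g) - (i/2) (∂_{Θe_μ} f) ⋆ g` (`moyal_coordMul`).

Each rule is applied twice and summed over `μ`: the first accounts for `-Δ`, the second for
`Ω²‖x‖²`. Skew-symmetry of `Θ` enters through `∑_ρ ∂_{Θe_ρ}² = -∑_{μν} (Θ²)_{μν} ∂_μ ∂_ν`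
(`sum_lineDeriv_sq`), which produces `G⁻¹`. The two sides are then compared as values of the
bilinear form `moyalBilin`.
-/

open MeasureTheory Real Matrix

noncomputable section

/-- Euclidean dot product on `Fin d → ℝ`. -/
def dotR {d : ℕ} (x y : Fin d → ℝ) : ℝ := ∑ i, x i * y i

/-- The Moyal product of two complex-valued functions on `ℝ^d`, defined by the
iterated integral `(f ⋆ g)(x) = (2π)^{-d} ∫ k ∫ y f(x + ½Θk) g(x+y) e^{i⟨k,y⟩}`. -/
def moyal {d : ℕ} (Θ : Matrix (Fin d) (Fin d) ℝ) (f g : (Fin d → ℝ) → ℂ)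
    (x : Fin d → ℝ) : ℂ :=
  ((2 * π) ^ d : ℝ)⁻¹ •
    ∫ k : Fin d → ℝ, ∫ y : Fin d → ℝ,
      f (x + (2 : ℝ)⁻¹ • Θ.mulVec k) * g (x + y) *
        Complex.exp (Complex.I * (dotR k y : ℂ))

/-- The covariant derivative `∇_μ = ∂_μ + (i/2)Ω̃² Σ_ν Θ_{μν} x^ν`. -/
def nablaOp {d : ℕ} (Θ : Matrix (Fin d) (Fin d) ℝ) (Ω : ℝ) (μ : Fin d)
    (ψ : (Fin d → ℝ) → ℂ) (x : Fin d → ℝ) : ℂ :=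
  fderiv ℝ ψ x (Pi.single μ 1) +
    Complex.I / 2 * ((Ω ^ 2 : ℝ) : ℂ) * ((∑ ν, Θ μ ν * x ν : ℝ) : ℂ) * ψ x

/-- The harmonic oscillator Hamiltonian `H ψ = −Δψ + Ω̃²‖x‖²ψ` on scalar functions. -/
def HopC {d : ℕ} (Ω : ℝ) (ψ : (Fin d → ℝ) → ℂ) (x : Fin d → ℝ) : ℂ :=
  -(∑ μ, fderiv ℝ (fun y => fderiv ℝ ψ y (Pi.single μ 1)) x (Pi.single μ 1)) +
    ((Ω ^ 2 * ∑ i, (x i) ^ 2 : ℝ) : ℂ) * ψ x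

open LineDeriv FourierTransform

section

variable {d : ℕ}

/-! ### The Fourier transform with phase `e^{i⟨k,y⟩}` -/

/-- The map `k ↦ -k / (2π)` from `ℝ^d` with the sup norm to Euclidean space. It converts Mathlib's
phase `e^{-2πi⟨v,w⟩}` into `e^{i⟨k,y⟩}`. -/
def scaleEquiv (d : ℕ) : (Fin d → ℝ) ≃L[ℝ] EuclideanSpace ℝ (Fin d) :=
  (EuclideanSpace.equiv (Fin d) ℝ).symm.trans
    (ContinuousLinearEquiv.smulLeft (Units.mk0 (-(2 * π)⁻¹ : ℝ) (by simp [Real.pi_ne_zero])))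

lemma scaleEquiv_apply (k : Fin d → ℝ) :
    scaleEquiv d k = (-(2 * π)⁻¹ : ℝ) • WithLp.toLp 2 k := rfl

/-- The transform `ĝ(k) = ∫ g(y) e^{i⟨k,y⟩} dy` as an operator on Schwartz functions, obtained from
Mathlib's Fourier transform on Euclidean space; `phaseFT_apply` is the integral formula. -/
def phaseFT : SchwartzMap (Fin d → ℝ) ℂ →L[ℂ] SchwartzMap (Fin d → ℝ) ℂ :=
  SchwartzMap.compCLMOfContinuousLinearEquiv ℂ (scaleEquiv d) ∘L
    SchwartzMap.fourierTransformCLM ℂ ∘L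
    SchwartzMap.compCLMOfContinuousLinearEquiv ℂ (EuclideanSpace.equiv (Fin d) ℝ)

lemma phaseFT_apply (g : SchwartzMap (Fin d → ℝ) ℂ) (k : Fin d → ℝ) :
    phaseFT g k = ∫ y : Fin d → ℝ, g y * Complex.exp (Complex.I * (dotR k y : ℂ)) := by
  have h1 : phaseFT g k =
    𝓕 (fun v : EuclideanSpace ℝ (Fin d) => g (WithLp.ofLp v)) (scaleEquiv d k) := rfl
  rw [h1, Real.fourier_eq', ← (PiLp.volume_preserving_ofLp (Fin d)).integral_comp
    (MeasurableEquiv.toLp 2 (Fin d → ℝ)).symm.measurableEmbedding]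
  refine integral_congr_ae (Filter.Eventually.of_forall fun v => ?_)
  have hpi : (π : ℂ) ≠ 0 := by exact_mod_cast Real.pi_ne_zero
  simp only [scaleEquiv_apply, inner_smul_right, smul_eq_mul]
  rw [mul_comm]
  congr 2
  simp only [dotR, PiLp.inner_apply]
  push_cast
  simp
  field_simp

/-- Multiplication of a Schwartz function by the coordinate `x_μ`. -/
def coordMul (μ : Fin d) : SchwartzMap (Fin d → ℝ) ℂ →L[ℂ] SchwartzMap (Fin d → ℝ) ℂ :=
  SchwartzMap.smulLeftCLM ℂ (fun y : Fin d → ℝ => ((y μ : ℝ) : ℂ))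

lemma coordMul_apply (μ : Fin d) (g : SchwartzMap (Fin d → ℝ) ℂ) (y : Fin d → ℝ) :
    coordMul μ g y = (y μ : ℂ) * g y := by
  have h : Function.HasTemperateGrowth (fun y : Fin d → ℝ => ((y μ : ℝ) : ℂ)) :=
    (Complex.ofRealCLM ∘L
      ContinuousLinearMap.proj (R := ℝ) (φ := fun _ : Fin d => ℝ) μ).hasTemperateGrowth
  rw [coordMul, SchwartzMap.smulLeftCLM_apply_apply h, smul_eq_mul]


lemma phaseFT_lineDeriv (μ : Fin d) (g : SchwartzMap (Fin d → ℝ) ℂ) (k : Fin d → ℝ) :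
    phaseFT (∂_{(Pi.single μ 1 : Fin d → ℝ)} g) k = -Complex.I * (k μ : ℂ) * phaseFT g k := by
  let e := EuclideanSpace.equiv (Fin d) ℝ
  have h1 := SchwartzMap.lineDerivOp_compCLMOfContinuousLinearEquiv ℂ
    (e.symm (Pi.single μ 1)) e g
  rw [e.apply_symm_apply] at h1
  have h2 : phaseFT (∂_{(Pi.single μ 1 : Fin d → ℝ)} g) k =
    𝓕 (SchwartzMap.compCLMOfContinuousLinearEquiv ℂ e (∂_{(Pi.single μ 1 : Fin d → ℝ)} g))
      (scaleEquiv d k) := rfl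
  have h3 : phaseFT g k = 𝓕 (SchwartzMap.compCLMOfContinuousLinearEquiv ℂ e g)
      (scaleEquiv d k) := rfl
  have hg : Function.HasTemperateGrowth
      (fun v : EuclideanSpace ℝ (Fin d) => inner ℝ v (e.symm (Pi.single μ 1))) := by fun_prop
  rw [h2, ← h1, h3, SchwartzMap.fourier_lineDerivOp_eq, _root_.smul_apply,
    SchwartzMap.smulLeftCLM_apply_apply hg, scaleEquiv_apply]
  have h4 : inner ℝ ((-(2 * π)⁻¹ : ℝ) • WithLp.toLp 2 k) (e.symm (Pi.single μ 1))
      = -(2 * π)⁻¹ * k μ := by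
    rw [inner_smul_left]
    simp [e, PiLp.inner_apply]
  have hpi : (π : ℂ) ≠ 0 := by exact_mod_cast Real.pi_ne_zero
  rw [h4, smul_eq_mul, Complex.real_smul]
  push_cast
  field_simp

lemma fderiv_phaseFT (μ : Fin d) (g : SchwartzMap (Fin d → ℝ) ℂ) (k : Fin d → ℝ) :
    fderiv ℝ (phaseFT g) k (Pi.single μ 1) = Complex.I * phaseFT (coordMul μ g) k := by
  let e := EuclideanSpace.equiv (Fin d) ℝ
  let G := SchwartzMap.compCLMOfContinuousLinearEquiv ℂ e g
  let m := scaleEquiv d (Pi.single μ 1)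
  have h1 : phaseFT g = SchwartzMap.compCLMOfContinuousLinearEquiv ℂ (scaleEquiv d) (𝓕 G) := rfl
  have h3 : phaseFT (coordMul μ g) k = 𝓕 (SchwartzMap.compCLMOfContinuousLinearEquiv ℂ e
      (coordMul μ g)) (scaleEquiv d k) := rfl
  have hg : Function.HasTemperateGrowth
      (fun v : EuclideanSpace ℝ (Fin d) => inner ℝ v m) := by fun_prop
  have h4 : (-(2 * π * Complex.I)) • SchwartzMap.smulLeftCLM ℂ (inner ℝ · m) G =
      Complex.I • SchwartzMap.compCLMOfContinuousLinearEquiv ℂ e (coordMul μ g) := by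
    ext v
    have h5 : inner ℝ v m = -(2 * π)⁻¹ * v μ := by
      simp only [m, scaleEquiv_apply, inner_smul_right]
      simp [PiLp.inner_apply]
    have hpi : (π : ℂ) ≠ 0 := by exact_mod_cast Real.pi_ne_zero
    rw [_root_.smul_apply, _root_.smul_apply, SchwartzMap.smulLeftCLM_apply_apply hg, h5,
      SchwartzMap.compCLMOfContinuousLinearEquiv_apply,
      SchwartzMap.compCLMOfContinuousLinearEquiv_apply, Function.comp_apply, Function.comp_apply,
      coordMul_apply, smul_eq_mul, smul_eq_mul, Complex.real_smul]
    change _ * (_ * g (e v)) = _ * ((v μ : ℂ) * g (e v))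
    push_cast
    field_simp
  rw [← SchwartzMap.lineDerivOp_apply_eq_fderiv, h1,
    SchwartzMap.lineDerivOp_compCLMOfContinuousLinearEquiv,
    SchwartzMap.lineDerivOp_fourier_eq, h4, FourierTransform.fourier_smul, h3]
  rfl

/-! ### The Moyal product as a single absolutely convergent integral -/

/-- The phase `e^{-i⟨k,x⟩}`. -/
def phaseKernel (x k : Fin d → ℝ) : ℂ := Complex.exp (-Complex.I * (dotR k x : ℂ))

/-- The linear form `x ↦ ⟨k,x⟩`. -/
def dotCLM (k : Fin d → ℝ) : (Fin d → ℝ) →L[ℝ] ℝ :=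
  ∑ i, k i • ContinuousLinearMap.proj (R := ℝ) i

lemma dotCLM_apply (k x : Fin d → ℝ) : dotCLM k x = dotR k x := by
  simp [dotCLM, dotR]

lemma dotR_comm (k x : Fin d → ℝ) : dotR k x = dotR x k := by
  simp [dotR, mul_comm]

lemma norm_dotCLM_le (k : Fin d → ℝ) : ‖dotCLM k‖ ≤ d * ‖k‖ := by
  refine ContinuousLinearMap.opNorm_le_bound _ (by positivity) fun x => ?_
  rw [dotCLM_apply, dotR]
  refine (norm_sum_le _ _).trans ?_
  calc ∑ i, ‖k i * x i‖ ≤ ∑ i : Fin d, ‖k‖ * ‖x‖ := by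
        gcongr with i
        rw [norm_mul]
        gcongr
        · exact norm_le_pi_norm k i
        · exact norm_le_pi_norm x i
    _ = d * ‖k‖ * ‖x‖ := by simp [mul_assoc]

lemma norm_phaseKernel (x k : Fin d → ℝ) : ‖phaseKernel x k‖ = 1 := by
  rw [phaseKernel, show -Complex.I * (dotR k x : ℂ) = ((-dotR k x : ℝ) : ℂ) * Complex.I by
    push_cast; ring, Complex.norm_exp_ofReal_mul_I]

lemma phaseKernel_comm (x k : Fin d → ℝ) : phaseKernel x k = phaseKernel k x := by
  simp [phaseKernel, dotR_comm]

lemma hasFDerivAt_phaseKernel (x k : Fin d → ℝ) :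
    HasFDerivAt (fun x => phaseKernel x k)
      ((-Complex.I * phaseKernel x k) • (Complex.ofRealCLM ∘L dotCLM k)) x := by
  have h : HasFDerivAt (fun x => -Complex.I * (dotR k x : ℂ))
      ((-Complex.I) • (Complex.ofRealCLM ∘L dotCLM k)) x := by
    have := ((Complex.ofRealCLM ∘L dotCLM k).hasFDerivAt (x := x)).const_mul (-Complex.I)
    simpa [dotCLM_apply] using this
  refine h.cexp.congr_fderiv ?_
  rw [smul_smul, mul_comm, phaseKernel]

lemma continuous_phaseKernel_right (x : Fin d → ℝ) : Continuous (phaseKernel x) := by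
  unfold phaseKernel dotR
  fun_prop

/-- The integrand `f(x + ½Θk) e^{-i⟨k,x⟩} ĝ(k)` of the outer integral once the inner one has been
evaluated. -/
def moyalIntegrand (Θ : Matrix (Fin d) (Fin d) ℝ) (f g : SchwartzMap (Fin d → ℝ) ℂ)
    (x k : Fin d → ℝ) : ℂ :=
  f (x + (2 : ℝ)⁻¹ • Θ.mulVec k) * phaseKernel x k * phaseFT g k

lemma moyal_eq (Θ : Matrix (Fin d) (Fin d) ℝ) (f g : SchwartzMap (Fin d → ℝ) ℂ)
    (x : Fin d → ℝ) :
    moyal Θ f g x = ((2 * π) ^ d : ℝ)⁻¹ • ∫ k, moyalIntegrand Θ f g x k := by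
  unfold moyal
  congr 1
  refine integral_congr_ae (Filter.Eventually.of_forall fun k => ?_)
  simp only [moyalIntegrand]
  rw [phaseFT_apply, ← integral_const_mul, ← integral_add_left_eq_self
    (fun y => f (x + (2 : ℝ)⁻¹ • Θ.mulVec k) * phaseKernel x k *
      (g y * Complex.exp (Complex.I * (dotR k y : ℂ)))) x]
  refine integral_congr_ae (Filter.Eventually.of_forall fun y => ?_)
  have : dotR k (x + y) = dotR k x + dotR k y := by simp [dotR, mul_add, Finset.sum_add_distrib]
  have h2 : Complex.exp (Complex.I * (dotR k y : ℂ)) =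
      phaseKernel x k * Complex.exp (Complex.I * (dotR k (x + y) : ℂ)) := by
    rw [phaseKernel, ← Complex.exp_add, this]
    push_cast
    ring_nf
  simp only [h2]
  ring

lemma exists_bound (f : SchwartzMap (Fin d → ℝ) ℂ) : ∃ C, 0 ≤ C ∧ ∀ y, ‖f y‖ ≤ C :=
  ⟨‖f.toBoundedContinuousFunction‖, norm_nonneg _,
    f.toBoundedContinuousFunction.norm_coe_le_norm⟩

lemma exists_bound_fderiv (f : SchwartzMap (Fin d → ℝ) ℂ) :
    ∃ C, 0 ≤ C ∧ ∀ y, ‖fderiv ℝ f y‖ ≤ C :=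
  ⟨‖(SchwartzMap.fderivCLM ℝ _ _ f).toBoundedContinuousFunction‖, norm_nonneg _,
    (SchwartzMap.fderivCLM ℝ _ _ f).toBoundedContinuousFunction.norm_coe_le_norm⟩

lemma continuous_shear (Θ : Matrix (Fin d) (Fin d) ℝ) (x : Fin d → ℝ) :
    Continuous fun k : Fin d → ℝ => x + (2 : ℝ)⁻¹ • Θ.mulVec k := by
  have := Continuous.matrix_mulVec (continuous_const (y := Θ)) (continuous_id (X := Fin d → ℝ))
  fun_prop

lemma integrable_shear_mul (Θ : Matrix (Fin d) (Fin d) ℝ) (f G : SchwartzMap (Fin d → ℝ) ℂ)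
    (x : Fin d → ℝ) :
    Integrable fun k => f (x + (2 : ℝ)⁻¹ • Θ.mulVec k) * phaseKernel x k * G k := by
  obtain ⟨C, -, hC⟩ := exists_bound f
  refine G.integrable.bdd_mul (c := C) ?_ ?_
  · exact ((f.continuous.comp (continuous_shear Θ x)).mul
      (continuous_phaseKernel_right x)).aestronglyMeasurable
  · exact Filter.Eventually.of_forall fun k => by
      rw [norm_mul, norm_phaseKernel, mul_one]
      exact hC _

lemma integrable_moyalIntegrand (Θ : Matrix (Fin d) (Fin d) ℝ)
    (f g : SchwartzMap (Fin d → ℝ) ℂ) (x : Fin d → ℝ) :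
    Integrable (moyalIntegrand Θ f g x) :=
  integrable_shear_mul Θ f (phaseFT g) x

/-- The value `(f ⋆ g)(x)` as a bilinear form in the Schwartz functions `f` and `g`. -/
def moyalBilin (Θ : Matrix (Fin d) (Fin d) ℝ) (x : Fin d → ℝ) :
    SchwartzMap (Fin d → ℝ) ℂ →ₗ[ℂ] SchwartzMap (Fin d → ℝ) ℂ →ₗ[ℂ] ℂ :=
  LinearMap.mk₂ ℂ (fun f g => moyal Θ f g x)
    (fun f f' g => by
      simp only [moyal_eq]
      rw [← smul_add, ← integral_add (integrable_moyalIntegrand Θ f g x)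
        (integrable_moyalIntegrand Θ f' g x)]
      refine congrArg _ (integral_congr_ae (Filter.Eventually.of_forall fun k => ?_))
      simp [moyalIntegrand, add_mul])
    (fun c f g => by
      simp only [moyal_eq]
      rw [smul_comm c, ← integral_smul c]
      refine congrArg _ (integral_congr_ae (Filter.Eventually.of_forall fun k => ?_))
      simp [moyalIntegrand, mul_assoc])
    (fun f g g' => by
      simp only [moyal_eq]
      rw [← smul_add, ← integral_add (integrable_moyalIntegrand Θ f g x)
        (integrable_moyalIntegrand Θ f g' x)]
      refine congrArg _ (integral_congr_ae (Filter.Eventually.of_forall fun k => ?_))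
      simp [moyalIntegrand, mul_add])
    (fun c f g => by
      simp only [moyal_eq]
      rw [smul_comm c, ← integral_smul c]
      refine congrArg _ (integral_congr_ae (Filter.Eventually.of_forall fun k => ?_))
      simp [moyalIntegrand]
      ring)

lemma moyalBilin_apply (Θ : Matrix (Fin d) (Fin d) ℝ) (x : Fin d → ℝ)
    (f g : SchwartzMap (Fin d → ℝ) ℂ) : moyalBilin Θ x f g = moyal Θ f g x := rfl

/-! ### The Leibniz rule -/

lemma hasFDerivAt_shear (Θ : Matrix (Fin d) (Fin d) ℝ) (f : SchwartzMap (Fin d → ℝ) ℂ)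
    (x k : Fin d → ℝ) :
    HasFDerivAt (fun x => f (x + (2 : ℝ)⁻¹ • Θ.mulVec k))
      (fderiv ℝ f (x + (2 : ℝ)⁻¹ • Θ.mulVec k)) x := by
  have := (f.differentiable (x := x + (2 : ℝ)⁻¹ • Θ.mulVec k)).hasFDerivAt
  exact (hasFDerivAt_comp_add_right _).2 this

/-- The derivative in `x` of the Moyal integrand. -/
def moyalIntegrandDeriv (Θ : Matrix (Fin d) (Fin d) ℝ) (f g : SchwartzMap (Fin d → ℝ) ℂ)
    (x k : Fin d → ℝ) : (Fin d → ℝ) →L[ℝ] ℂ :=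
  (phaseKernel x k * phaseFT g k) • fderiv ℝ f (x + (2 : ℝ)⁻¹ • Θ.mulVec k) +
    (f (x + (2 : ℝ)⁻¹ • Θ.mulVec k) * (-Complex.I * phaseKernel x k) * phaseFT g k) •
      (Complex.ofRealCLM ∘L dotCLM k)

lemma hasFDerivAt_moyalIntegrand (Θ : Matrix (Fin d) (Fin d) ℝ)
    (f g : SchwartzMap (Fin d → ℝ) ℂ) (x k : Fin d → ℝ) :
    HasFDerivAt (fun x => moyalIntegrand Θ f g x k) (moyalIntegrandDeriv Θ f g x k) x := by
  have := ((hasFDerivAt_shear Θ f x k).mul (hasFDerivAt_phaseKernel x k)).mul_const (phaseFT g k)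
  refine this.congr_fderiv ?_
  ext v
  simp [moyalIntegrandDeriv]
  ring

/-- A bound uniform in `x`, of the form `A ‖ĝ(k)‖ + B d ‖k‖ ‖ĝ(k)‖`, which dominates the
differentiation under the integral. -/
lemma exists_bound_moyalIntegrandDeriv (Θ : Matrix (Fin d) (Fin d) ℝ)
    (f g : SchwartzMap (Fin d → ℝ) ℂ) :
    ∃ b : (Fin d → ℝ) → ℝ, Integrable b ∧ ∀ x k, ‖moyalIntegrandDeriv Θ f g x k‖ ≤ b k := by
  obtain ⟨C, hC0, hC⟩ := exists_bound f
  obtain ⟨C', hC'0, hC'⟩ := exists_bound_fderiv f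
  refine ⟨fun k => ‖phaseFT g k‖ * C' + C * d * (‖k‖ ^ 1 * ‖phaseFT g k‖),
    ((phaseFT g).integrable.norm.mul_const C').add
      (((phaseFT g).integrable_pow_mul volume 1).const_mul _), fun x k => ?_⟩
  refine (norm_add_le _ _).trans (add_le_add ?_ ?_)
  · rw [norm_smul, norm_mul, norm_phaseKernel, one_mul]
    gcongr
    exact hC' _
  · rw [norm_smul, norm_mul, norm_mul, norm_mul, norm_phaseKernel, norm_neg, Complex.norm_I]
    have h1 : ‖Complex.ofRealCLM ∘L dotCLM k‖ ≤ d * ‖k‖ := by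
      refine (ContinuousLinearMap.opNorm_comp_le _ _).trans ?_
      rw [Complex.ofRealCLM_norm, one_mul]
      exact norm_dotCLM_le k
    calc _ ≤ C * (1 * 1) * ‖phaseFT g k‖ * (d * ‖k‖) := by
          gcongr
          exact hC _
      _ = _ := by ring

lemma continuous_moyalIntegrandDeriv (Θ : Matrix (Fin d) (Fin d) ℝ)
    (f g : SchwartzMap (Fin d → ℝ) ℂ) (x : Fin d → ℝ) :
    Continuous (moyalIntegrandDeriv Θ f g x) := by
  have h1 : Continuous fun k : Fin d → ℝ => f (x + (2 : ℝ)⁻¹ • Θ.mulVec k) :=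
    f.continuous.comp (continuous_shear Θ x)
  have h2 : Continuous fun k : Fin d → ℝ => fderiv ℝ f (x + (2 : ℝ)⁻¹ • Θ.mulVec k) :=
    (SchwartzMap.fderivCLM ℝ _ _ f).continuous.comp (continuous_shear Θ x)
  have h3 := continuous_phaseKernel_right x
  have h4 := (phaseFT g).continuous
  have h5 : Continuous fun k : Fin d → ℝ => Complex.ofRealCLM ∘L dotCLM k := by
    unfold dotCLM
    fun_prop
  unfold moyalIntegrandDeriv
  fun_prop

lemma hasFDerivAt_moyal (Θ : Matrix (Fin d) (Fin d) ℝ)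
    (f g : SchwartzMap (Fin d → ℝ) ℂ) (x : Fin d → ℝ) :
    HasFDerivAt (moyal Θ f g)
      (((2 * π) ^ d : ℝ)⁻¹ • ∫ k, moyalIntegrandDeriv Θ f g x k) x := by
  obtain ⟨b, hb, hle⟩ := exists_bound_moyalIntegrandDeriv Θ f g
  have h := hasFDerivAt_integral_of_dominated_of_fderiv_le (𝕜 := ℝ) (μ := volume)
    (F := moyalIntegrand Θ f g) (F' := moyalIntegrandDeriv Θ f g) (x₀ := x) (bound := b)
    Filter.univ_mem
    (Filter.Eventually.of_forall fun y => (integrable_moyalIntegrand Θ f g y).1)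
    (integrable_moyalIntegrand Θ f g x)
    (continuous_moyalIntegrandDeriv Θ f g x).aestronglyMeasurable
    (Filter.Eventually.of_forall fun k y _ => hle y k) hb
    (Filter.Eventually.of_forall fun k y _ => hasFDerivAt_moyalIntegrand Θ f g y k)
  rw [show moyal Θ f g = fun y => ((2 * π) ^ d : ℝ)⁻¹ • ∫ k, moyalIntegrand Θ f g y k from
    funext (moyal_eq Θ f g)]
  exact h.const_smul (((2 * π) ^ d : ℝ)⁻¹)

lemma dotR_single (k : Fin d → ℝ) (μ : Fin d) : dotR k (Pi.single μ 1) = k μ := by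
  simp [dotR, Pi.single_apply]

/-- The Leibniz rule for the Moyal product. -/
lemma fderiv_moyal (Θ : Matrix (Fin d) (Fin d) ℝ)
    (f g : SchwartzMap (Fin d → ℝ) ℂ) (x : Fin d → ℝ) (μ : Fin d) :
    fderiv ℝ (moyal Θ f g) x (Pi.single μ 1) =
      moyal Θ (∂_{(Pi.single μ 1 : Fin d → ℝ)} f : SchwartzMap (Fin d → ℝ) ℂ) g x +
        moyal Θ f (∂_{(Pi.single μ 1 : Fin d → ℝ)} g : SchwartzMap (Fin d → ℝ) ℂ) x := by
  obtain ⟨b, hb, hle⟩ := exists_bound_moyalIntegrandDeriv Θ f g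
  have hint : Integrable (moyalIntegrandDeriv Θ f g x) :=
    hb.mono' (continuous_moyalIntegrandDeriv Θ f g x).aestronglyMeasurable
      (Filter.Eventually.of_forall (hle x))
  rw [(hasFDerivAt_moyal Θ f g x).fderiv, _root_.smul_apply,
    ContinuousLinearMap.integral_apply hint, moyal_eq, moyal_eq, ← smul_add,
    ← integral_add (integrable_moyalIntegrand _ _ _ _) (integrable_moyalIntegrand _ _ _ _)]
  refine congrArg _ (integral_congr_ae (Filter.Eventually.of_forall fun k => ?_))
  simp only [moyalIntegrand, phaseFT_lineDeriv, SchwartzMap.lineDerivOp_apply_eq_fderiv]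
  simp [moyalIntegrandDeriv, dotCLM_apply, dotR_single]
  ring

/-! ### Multiplication by coordinates -/

/-- Integration by parts in `k`: a factor `x_μ` on the right factor comes out of the Moyal product
at the cost of a derivative of `f` along `Θ e_μ`. -/
lemma moyal_coordMul (Θ : Matrix (Fin d) (Fin d) ℝ)
    (f g : SchwartzMap (Fin d → ℝ) ℂ) (x : Fin d → ℝ) (μ : Fin d) :
    moyal Θ f (coordMul μ g) x = (x μ : ℂ) * moyal Θ f g x +
      Complex.I / 2 * moyal Θ (∂_{Θ.mulVec (Pi.single μ 1)} f : SchwartzMap (Fin d → ℝ) ℂ) g x := by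
  set v : Fin d → ℝ := Pi.single μ 1
  set f' : SchwartzMap (Fin d → ℝ) ℂ := ∂_{Θ.mulVec v} f
  have hshear (k : Fin d → ℝ) : HasFDerivAt (fun k : Fin d → ℝ => f (x + (2 : ℝ)⁻¹ • Θ.mulVec k))
      (fderiv ℝ f (x + (2 : ℝ)⁻¹ • Θ.mulVec k) ∘L
        ((2 : ℝ)⁻¹ • LinearMap.toContinuousLinearMap Θ.mulVecLin)) k := by
    have h1 : HasFDerivAt (fun k : Fin d → ℝ => x + (2 : ℝ)⁻¹ • Θ.mulVec k)
        ((2 : ℝ)⁻¹ • LinearMap.toContinuousLinearMap Θ.mulVecLin) k :=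
      (((2 : ℝ)⁻¹ • LinearMap.toContinuousLinearMap Θ.mulVecLin).hasFDerivAt).const_add x
    exact (f.differentiable.differentiableAt.hasFDerivAt).comp k h1
  have hker (k : Fin d → ℝ) : HasFDerivAt (fun k => phaseKernel x k)
      ((-Complex.I * phaseKernel x k) • (Complex.ofRealCLM ∘L dotCLM x)) k := by
    have := hasFDerivAt_phaseKernel k x
    simpa only [phaseKernel_comm _ x] using this
  let F : (Fin d → ℝ) → ℂ := fun k => f (x + (2 : ℝ)⁻¹ • Θ.mulVec k) * phaseKernel x k
  have hF (k : Fin d → ℝ) := (hshear k).mul (hker k)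
  have hF' (k : Fin d → ℝ) : fderiv ℝ F k v * phaseFT g k =
      (2⁻¹ : ℂ) * moyalIntegrand Θ f' g x k +
        (-Complex.I * (x μ : ℂ)) * moyalIntegrand Θ f g x k := by
    rw [show fderiv ℝ F k = _ from (hF k).fderiv]
    simp [moyalIntegrand, f', SchwartzMap.lineDerivOp_apply_eq_fderiv, dotCLM_apply, v,
      dotR_single]
    ring
  have hG (k : Fin d → ℝ) : F k * fderiv ℝ (phaseFT g) k v =
      Complex.I * moyalIntegrand Θ f (coordMul μ g) x k := by
    rw [fderiv_phaseFT, moyalIntegrand]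
    ring
  have i1 := (integrable_moyalIntegrand Θ f' g x).const_mul (2⁻¹ : ℂ)
  have i2 := (integrable_moyalIntegrand Θ f g x).const_mul (-Complex.I * (x μ : ℂ))
  have i3 := (integrable_moyalIntegrand Θ f (coordMul μ g) x).const_mul Complex.I
  have key := integral_mul_fderiv_eq_neg_fderiv_mul_of_integrable (μ := volume)
    (f := F) (g := phaseFT g) (v := v)
    ((i1.add i2).congr (Filter.Eventually.of_forall fun k => (hF' k).symm))
    (i3.congr (Filter.Eventually.of_forall fun k => (hG k).symm))
    (integrable_moyalIntegrand Θ f g x)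
    (fun k _ => (hF k).differentiableAt) (fun k _ => (phaseFT g).differentiable.differentiableAt)
  simp only [hF', hG] at key
  rw [integral_add i1 i2, integral_const_mul, integral_const_mul, integral_const_mul] at key
  simp only [moyal_eq, Complex.real_smul]
  linear_combination (-Complex.I * ((((2 * π) ^ d : ℝ)⁻¹ : ℝ) : ℂ)) * key +
    ((((2 * π) ^ d : ℝ)⁻¹ : ℝ) : ℂ) * ((∫ k, moyalIntegrand Θ f (coordMul μ g) x k) -
      (x μ : ℂ) * ∫ k, moyalIntegrand Θ f g x k) * Complex.I_sq

/-! ### Second-order identities -/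

/-- Second-order Leibniz rule for the Moyal product along a coordinate direction. -/
lemma fderiv_fderiv_moyal (Θ : Matrix (Fin d) (Fin d) ℝ)
    (f g : SchwartzMap (Fin d → ℝ) ℂ) (x : Fin d → ℝ) (μ : Fin d) :
    let e : Fin d → ℝ := Pi.single μ 1
    fderiv ℝ (fun y => fderiv ℝ (moyal Θ f g) y e) x e =
      moyalBilin Θ x (∂_{e} (∂_{e} f)) g + 2 * moyalBilin Θ x (∂_{e} f) (∂_{e} g) +
        moyalBilin Θ x f (∂_{e} (∂_{e} g)) := by
  intro e
  have h : (fun y => fderiv ℝ (moyal Θ f g) y e) =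
      moyal Θ (∂_{e} f : SchwartzMap (Fin d → ℝ) ℂ) g +
        moyal Θ f (∂_{e} g : SchwartzMap (Fin d → ℝ) ℂ) :=
    funext fun y => fderiv_moyal Θ f g y μ
  rw [h, fderiv_add (hasFDerivAt_moyal _ _ _ _).differentiableAt
    (hasFDerivAt_moyal _ _ _ _).differentiableAt, _root_.add_apply, fderiv_moyal, fderiv_moyal]
  simp only [moyalBilin_apply, e]
  ring

/-- Multiplying the Moyal product by `x_μ²`: each factor `x_μ` either lands on `g` or becomes
a derivative of `f` along `Θ e_μ`. -/
lemma sq_mul_moyal (Θ : Matrix (Fin d) (Fin d) ℝ)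
    (f g : SchwartzMap (Fin d → ℝ) ℂ) (x : Fin d → ℝ) (μ : Fin d) :
    let v : Fin d → ℝ := Θ.mulVec (Pi.single μ 1)
    (x μ : ℂ) ^ 2 * moyalBilin Θ x f g =
      moyalBilin Θ x f (coordMul μ (coordMul μ g)) -
        Complex.I * moyalBilin Θ x (∂_{v} f) (coordMul μ g) -
        (4⁻¹ : ℂ) * moyalBilin Θ x (∂_{v} (∂_{v} f)) g := by
  intro v
  have h1 := moyal_coordMul Θ f g x μ
  have h2 := moyal_coordMul Θ f (coordMul μ g) x μ
  have h3 := moyal_coordMul Θ (∂_{v} f) g x μ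
  simp only [moyalBilin_apply, v] at *
  rw [h2, h3, h1]
  linear_combination ((4⁻¹ : ℂ) * moyal Θ
    (∂_{Θ.mulVec (Pi.single μ 1)} (∂_{Θ.mulVec (Pi.single μ 1)} f :
      SchwartzMap (Fin d → ℝ) ℂ) : SchwartzMap (Fin d → ℝ) ℂ) g x) * Complex.I_sq

lemma lineDeriv_mulVec_single (Θ : Matrix (Fin d) (Fin d) ℝ) (f : SchwartzMap (Fin d → ℝ) ℂ)
    (μ : Fin d) :
    (∂_{Θ.mulVec (Pi.single μ 1)} f : SchwartzMap (Fin d → ℝ) ℂ) =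
      ∑ ν, (Θ ν μ : ℂ) • ∂_{(Pi.single ν 1 : Fin d → ℝ)} f := by
  ext y
  have h : Θ.mulVec (Pi.single μ 1) = ∑ ν, Θ ν μ • (Pi.single ν 1 : Fin d → ℝ) := by
    ext i
    simp [Finset.sum_apply, Pi.single_apply]
  rw [SchwartzMap.lineDerivOp_apply_eq_fderiv, h, map_sum, _root_.sum_apply]
  simp [SchwartzMap.lineDerivOp_apply_eq_fderiv]

/-! ### The operators of the theorem as operators on Schwartz functions -/

lemma HopC_schwartz (Ω : ℝ) (g : SchwartzMap (Fin d → ℝ) ℂ) :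
    HopC Ω g = ⇑(-(∑ μ, ∂_{(Pi.single μ 1 : Fin d → ℝ)} (∂_{(Pi.single μ 1 : Fin d → ℝ)} g)) +
      ((Ω ^ 2 : ℝ) : ℂ) • ∑ μ, coordMul μ (coordMul μ g)) := by
  ext y
  simp only [HopC, _root_.add_apply, _root_.neg_apply, _root_.smul_apply, _root_.sum_apply,
    coordMul_apply, SchwartzMap.lineDerivOp_apply_eq_fderiv, smul_eq_mul]
  congr 1
  push_cast
  rw [mul_assoc, Finset.sum_mul]
  congr 1
  exact Finset.sum_congr rfl fun i _ => by ring

lemma nablaOp_schwartz (Θ : Matrix (Fin d) (Fin d) ℝ) (Ω : ℝ) (μ : Fin d)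
    (g : SchwartzMap (Fin d → ℝ) ℂ) :
    nablaOp Θ Ω μ g = ⇑(∂_{(Pi.single μ 1 : Fin d → ℝ)} g +
      (Complex.I / 2 * ((Ω ^ 2 : ℝ) : ℂ)) • ∑ ν, (Θ μ ν : ℂ) • coordMul ν g) := by
  ext y
  simp only [nablaOp, _root_.add_apply, _root_.smul_apply, _root_.sum_apply,
    coordMul_apply, SchwartzMap.lineDerivOp_apply_eq_fderiv, smul_eq_mul]
  push_cast
  simp only [Finset.mul_sum, Finset.sum_mul, mul_assoc]

/-- Skew-symmetry turns `∑_ρ ∂_{Θe_ρ}²` into `-∑_{μν} (Θ²)_{μν} ∂_μ ∂_ν`. -/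
lemma sum_lineDeriv_sq (Θ : Matrix (Fin d) (Fin d) ℝ) (hskew : Θᵀ = -Θ)
    (f : SchwartzMap (Fin d → ℝ) ℂ) :
    (∑ ρ, ∂_{Θ.mulVec (Pi.single ρ 1)} (∂_{Θ.mulVec (Pi.single ρ 1)} f) :
      SchwartzMap (Fin d → ℝ) ℂ) =
      -∑ μ, ∑ ν, (((Θ * Θ) μ ν : ℝ) : ℂ) •
        ∂_{(Pi.single μ 1 : Fin d → ℝ)} (∂_{(Pi.single ν 1 : Fin d → ℝ)} f) := by
  have hs (i j : Fin d) : Θ i j = -Θ j i := by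
    have := congrFun (congrFun hskew j) i
    simpa using this
  simp only [lineDeriv_mulVec_single, lineDerivOp_sum, lineDerivOp_smul, Finset.smul_sum,
    smul_smul]
  conv_rhs => rw [Finset.sum_comm]
  rw [Finset.sum_comm, ← Finset.sum_neg_distrib]
  refine Finset.sum_congr rfl fun μ _ => ?_
  rw [Finset.sum_comm, ← Finset.sum_neg_distrib]
  refine Finset.sum_congr rfl fun ν _ => ?_
  rw [Matrix.mul_apply, Complex.ofReal_sum, Finset.sum_smul, ← Finset.sum_neg_distrib]
  refine Finset.sum_congr rfl fun ρ _ => ?_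
  rw [hs μ ρ, ← neg_smul]
  push_cast
  ring_nf

lemma invMetric_schwartz (Θ : Matrix (Fin d) (Fin d) ℝ) (hskew : Θᵀ = -Θ) (Ω : ℝ)
    (f : SchwartzMap (Fin d → ℝ) ℂ) :
    (fun y => ∑ μ, ∑ ν, (((((1 : Matrix (Fin d) (Fin d) ℝ) - (Ω ^ 2 / 4) • (Θ * Θ)) μ ν : ℝ)) : ℂ) *
      fderiv ℝ (fun z => fderiv ℝ ⇑f z (Pi.single ν 1)) y (Pi.single μ 1)) =
    ⇑((∑ μ, ∂_{(Pi.single μ 1 : Fin d → ℝ)} (∂_{(Pi.single μ 1 : Fin d → ℝ)} f)) +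
      ((Ω ^ 2 / 4 : ℝ) : ℂ) • ∑ ρ, ∂_{Θ.mulVec (Pi.single ρ 1)}
        (∂_{Θ.mulVec (Pi.single ρ 1)} f) : SchwartzMap (Fin d → ℝ) ℂ) := by
  rw [sum_lineDeriv_sq Θ hskew]
  ext y
  simp only [_root_.add_apply, _root_.smul_apply, _root_.neg_apply, _root_.sum_apply,
    smul_eq_mul]
  have h (μ ν : Fin d) : fderiv ℝ (fun z => fderiv ℝ ⇑f z (Pi.single ν 1)) y (Pi.single μ 1) =
      (∂_{(Pi.single μ 1 : Fin d → ℝ)} (∂_{(Pi.single ν 1 : Fin d → ℝ)} f) :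
        SchwartzMap (Fin d → ℝ) ℂ) y := rfl
  simp only [h, Matrix.sub_apply, Matrix.smul_apply, Complex.ofReal_sub, sub_mul,
    Finset.sum_sub_distrib, smul_eq_mul, Complex.ofReal_mul, mul_assoc, ← Finset.mul_sum]
  rw [mul_neg, sub_eq_add_neg]
  congr 1
  simp [Matrix.one_apply, apply_ite Complex.ofReal, ite_mul]

end

/-! ### The commutator -/

/-- Commutator of the harmonic oscillator with left Moyal
multiplication: `H(f ⋆ ψ) − f ⋆ Hψ = −(Σ_{μν}(G⁻¹)_{μν}∂_μ∂_ν f) ⋆ ψ − 2 Σ_μ (∂_μ f) ⋆ (∇_μ ψ)`,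
where `G⁻¹ = 1 − ¼Ω̃²Θ²`. -/
theorem harmonic_moyal_commutator {d : ℕ} (hd : Even d) (hd2 : 2 ≤ d)
    (Θ : Matrix (Fin d) (Fin d) ℝ) (hskew : Θᵀ = -Θ) (hdet : Θ.det ≠ 0)
    (Ω : ℝ) (hΩ : 0 < Ω)
    (f ψ : SchwartzMap ((Fin d) → ℝ) ℂ) (x : Fin d → ℝ) :
    HopC Ω (moyal Θ ⇑f ⇑ψ) x - moyal Θ ⇑f (HopC Ω ⇑ψ) x
      = -(moyal Θ (fun y => ∑ μ, ∑ ν,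
            (((((1 : Matrix (Fin d) (Fin d) ℝ) - (Ω ^ 2 / 4) • (Θ * Θ)) μ ν : ℝ)) : ℂ) *
              fderiv ℝ (fun z => fderiv ℝ ⇑f z (Pi.single ν 1)) y (Pi.single μ 1)) ⇑ψ x)
        - 2 * ∑ μ, moyal Θ (fun y => fderiv ℝ ⇑f y (Pi.single μ 1))
            (nablaOp Θ Ω μ ⇑ψ) x := by
  have hx2 : ((Ω ^ 2 * ∑ i, (x i) ^ 2 : ℝ) : ℂ) * moyal Θ ⇑f ⇑ψ x =
      ((Ω ^ 2 : ℝ) : ℂ) * ∑ μ, (x μ : ℂ) ^ 2 * moyalBilin Θ x f ψ := by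
    rw [← Finset.sum_mul, moyalBilin_apply]
    push_cast
    ring
  have hf1 (μ : Fin d) : (fun y => fderiv ℝ ⇑f y (Pi.single μ 1)) =
      ⇑(∂_{(Pi.single μ 1 : Fin d → ℝ)} f : SchwartzMap (Fin d → ℝ) ℂ) := rfl
  -- The mixed terms `∂_μ f ⋆ Θ_{μν} x_ν ψ`, regrouped as derivatives of `f` along `Θ e_ν`.
  have hmix : ∑ μ, ∑ ν, (Θ μ ν : ℂ) *
        moyalBilin Θ x (∂_{(Pi.single μ 1 : Fin d → ℝ)} f) (coordMul ν ψ) =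
      ∑ ν, moyalBilin Θ x (∂_{Θ.mulVec (Pi.single ν 1)} f) (coordMul ν ψ) := by
    rw [Finset.sum_comm]
    refine Finset.sum_congr rfl fun ν _ => ?_
    rw [lineDeriv_mulVec_single]
    simp
  rw [HopC_schwartz, invMetric_schwartz Θ hskew, HopC, hx2]
  simp only [hf1, nablaOp_schwartz, fderiv_fderiv_moyal, sq_mul_moyal]
  simp only [← moyalBilin_apply, map_add, map_neg, map_sum, map_smul, LinearMap.add_apply,
    LinearMap.smul_apply, LinearMap.sum_apply, Finset.sum_add_distrib, Finset.sum_sub_distrib,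
    smul_eq_mul, ← Finset.mul_sum]
  rw [hmix]
  push_cast
  ring

end
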